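/- Let ψ be a Cartan–Hadamard model function such that ∫₀^∞ Θ(s)^{1/(p−1)} ds < +∞. Then every global radial solution u satisfies ∫₀^∞ |u′(r)|^p ψ(r)^{n−1} dr = +∞ (the solution has infinite energy). -/

import Mathlib

open Real Filter MeasureTheory
open scoped ENNReal Topology

/-- The volume-to-surface ratio `Θ(r) = (∫₀ʳ ψ(s)^{n-1} ds) / ψ(r)^{n-1}`. -/
noncomputable def Theta (n : ℕ) (ψ : ℝ → ℝ) (r : ℝ) : ℝ :=
  (∫ s in (0:ℝ)..r, ψ s ^ (n - 1)) / ψ r ^ (n - 1)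

/-- A Cartan–Hadamard model function: smooth, `ψ(0)=0`, `ψ'(0)=1`, convex on `[0,∞)`,
positive on `(0,∞)`. -/
def IsCHModel (ψ : ℝ → ℝ) : Prop :=
  ContDiff ℝ (⊤ : ℕ∞) ψ ∧ ψ 0 = 0 ∧ deriv ψ 0 = 1 ∧
    (∀ r : ℝ, 0 ≤ r → 0 ≤ deriv (deriv ψ) r) ∧ (∀ r : ℝ, 0 < r → 0 < ψ r)

/-- A radial solution on `[0,T)` (with `T ∈ (0,∞]`) with initial datum `α`:
`u ∈ C¹([0,T))`, `u(0)=α`, `u'(0)=0`, `u>0` on `[0,T)`, and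
`(ψ^{n-1} |u'|^{p-2} u')' = -ψ^{n-1} u^q` on `(0,T)`. -/
structure IsRadialSolution (n : ℕ) (p q : ℝ) (ψ : ℝ → ℝ) (T : ℝ≥0∞) (α : ℝ)
    (u : ℝ → ℝ) : Prop where
  init : u 0 = α
  deriv_init : deriv u 0 = 0
  pos : ∀ r : ℝ, 0 ≤ r → ENNReal.ofReal r < T → 0 < u r
  diff : ∀ r : ℝ, 0 ≤ r → ENNReal.ofReal r < T → DifferentiableAt ℝ u r
  deriv_cont : ContinuousOn (deriv u) {r : ℝ | 0 ≤ r ∧ ENNReal.ofReal r < T}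
  eqn : ∀ r : ℝ, 0 < r → ENNReal.ofReal r < T →
    HasDerivAt (fun s => ψ s ^ (n - 1) * |deriv u s| ^ (p - 2) * deriv u s)
      (-(ψ r ^ (n - 1) * u r ^ q)) r

/-- The energy function `F_u(r) = ((p-1)/p)|u'(r)|^p + u(r)^{q+1}/(q+1)`. -/
noncomputable def energyF (p q : ℝ) (u : ℝ → ℝ) (r : ℝ) : ℝ :=
  (p - 1) / p * |deriv u r| ^ p + u r ^ (q + 1) / (q + 1)

/-- The Pohozaev function
`P_u(r) = (∫₀ʳ ψ^{n-1}) F_u(r) + (ψ(r)^{n-1}/(q+1)) |u'(r)|^{p-2} u'(r) u(r)`. -/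
noncomputable def pohozaevP (n : ℕ) (p q : ℝ) (ψ u : ℝ → ℝ) (r : ℝ) : ℝ :=
  (∫ s in (0:ℝ)..r, ψ s ^ (n - 1)) * energyF p q u r +
    ψ r ^ (n - 1) / (q + 1) * (|deriv u r| ^ (p - 2) * deriv u r * u r)

/-- `K(r) = ((p-1)/p + 1/(q+1)) ψ(r)^{n-1} - (n-1)(ψ'(r)/ψ(r)) ∫₀ʳ ψ^{n-1}`. -/
noncomputable def Kfun (n : ℕ) (p q : ℝ) (ψ : ℝ → ℝ) (r : ℝ) : ℝ :=
  ((p - 1) / p + 1 / (q + 1)) * ψ r ^ (n - 1) -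
    ((n : ℝ) - 1) * (deriv ψ r / ψ r) * ∫ s in (0:ℝ)..r, ψ s ^ (n - 1)

/-- Condition (a): `r^γ ψ'(r)/ψ(r) → ℓ ∈ (0,∞)` for some `γ ∈ [0,1)`. -/
def CondA (ψ : ℝ → ℝ) : Prop :=
  ∃ γ ℓ : ℝ, 0 ≤ γ ∧ γ < 1 ∧ 0 < ℓ ∧
    Tendsto (fun r : ℝ => r ^ γ * deriv ψ r / ψ r) atTop (nhds ℓ)

/-- Condition (b): `ψ'/ψ → +∞` and `(ψ/ψ') (log(ψ'/ψ))' → 0`. -/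
def CondB (ψ : ℝ → ℝ) : Prop :=
  Tendsto (fun r : ℝ => deriv ψ r / ψ r) atTop atTop ∧
    Tendsto (fun r : ℝ => ψ r / deriv ψ r *
      deriv (fun s : ℝ => Real.log (deriv ψ s / ψ s)) r) atTop (nhds 0)

/-!
Write `V(r) = ∫₀ʳ ψ^{n-1}` and let `W = -ψ^{n-1}|u'|^{p-2}u'` be the flux of the solution, so that
`W' = ψ^{n-1}u^q > 0` and the energy density is `W|u'|`. Since `u` decreases, there are two cases.

If `u ≥ l > 0`, the energy density `X` satisfies `X^{-(p-1)} = ψ^{n-1}W^{-p} ≤ l^{-q} W' W^{-p}`,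
which is integrable at infinity; as `1 ≤ X + X^{-(p-1)}`, the energy grows at least linearly.

If `u → 0`, the Pohozaev identity `P' = K|u'|^p` enters. The function `D = nVψ' - ψⁿ` vanishes at
`0` and has derivative `nVψ'' ≥ 0`, and `K ≤ 0` follows from `D ≥ 0` and the bound on `q`, strictly
somewhere unless `q` is critical and `ψ` is Euclidean. Hence `P` is eventually below a negative
constant, which bounds `Wu` below by some `k > 0`. Then `W|u'| ≥ -k u'/u` and the energy dominates
`-k log u → ∞`. The Euclidean model is excluded because there `Θ(r) = r/n`, no power of which is
integrable on `(0, ∞)`.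
-/

/-! ### Calculus on the half-line -/

section Calculus

variable {f f' g g' : ℝ → ℝ} {a x : ℝ}

lemma monotoneOn_of_hasDerivAt_nonneg {S : Set ℝ} (hS : Convex ℝ S) (hSa : S ⊆ Set.Ici a)
    (hf : ContinuousOn f S) (hf' : ∀ x ∈ S, a < x → HasDerivAt f (f' x) x)
    (h : ∀ x ∈ S, a < x → 0 ≤ f' x) : MonotoneOn f S := by
  have hlt : ∀ x ∈ interior S, a < x := fun x hx => by
    simpa only [interior_Ici, Set.mem_Ioi] using interior_mono hSa hx
  exact monotoneOn_of_hasDerivWithinAt_nonneg hS hf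
    (fun x hx => (hf' x (interior_subset hx) (hlt x hx)).hasDerivWithinAt)
    fun x hx => h x (interior_subset hx) (hlt x hx)

lemma pos_of_eventually_nonneg_of_hasDerivAt_ne_zero {c : ℝ} (hf : ∀ᶠ y in 𝓝 x, 0 ≤ f y)
    (hf' : HasDerivAt f c x) (hc : c ≠ 0) : 0 < f x := by
  refine hf.self_of_nhds.lt_of_ne fun hx => hc ?_
  have hmin : IsLocalMin f x := hf.mono fun y hy => hx ▸ hy
  exact hmin.hasDerivAt_eq_zero hf'

lemma tendsto_atTop_of_hasDerivAt_le (hf : ∀ x, a < x → HasDerivAt f (f' x) x)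
    (hg : ∀ x, a < x → HasDerivAt g (g' x) x) (h : ∀ x, a < x → g' x ≤ f' x)
    (hg_top : Tendsto g atTop atTop) : Tendsto f atTop atTop := by
  have hd : ∀ x, a < x → HasDerivAt (f - g) (f' x - g' x) x := fun x hx => (hf x hx).sub (hg x hx)
  have hmono : MonotoneOn (f - g) (Set.Ioi a) :=
    monotoneOn_of_hasDerivAt_nonneg (convex_Ioi a) Set.Ioi_subset_Ici_self
      (fun x hx => (hd x hx).continuousAt.continuousWithinAt) (fun x _ => hd x)
      fun x _ hx => sub_nonneg.2 (h x hx)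
  refine tendsto_atTop_mono' atTop ?_ (tendsto_atTop_add_const_left atTop ((f - g) (a + 1)) hg_top)
  filter_upwards [eventually_ge_atTop (a + 1)] with x hx
  have hfg := hmono (lt_add_one a) ((lt_add_one a).trans_le hx) hx
  simp only [Pi.sub_apply] at hfg ⊢
  linarith

end Calculus

/-! ### The `p`-Laplacian nonlinearity -/

section RealPowers

variable {p : ℝ}

lemma abs_rpow_sub_two_mul_abs (hp : p ≠ 1) (x : ℝ) : |x| ^ (p - 2) * |x| = |x| ^ (p - 1) := by
  rw [← rpow_add_one' (abs_nonneg x) (by grind)]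
  ring_nf

lemma abs_rpow_sub_two_mul_mul_self (hp : p ≠ 0) (x : ℝ) : |x| ^ (p - 2) * x * x = |x| ^ p := by
  rw [mul_assoc, ← abs_mul_abs_self x, ← sq, ← rpow_add_natCast' (abs_nonneg x) (by simpa using hp)]
  simp

lemma continuous_abs_rpow_sub_two_mul (hp : 1 < p) :
    Continuous fun x : ℝ => |x| ^ (p - 2) * x := by
  have hderiv : deriv (fun x : ℝ => ‖x‖ ^ p) = fun x => p * (|x| ^ (p - 2) * x) := by
    funext x
    rw [(hasDerivAt_norm_rpow x hp).deriv, mul_assoc, norm_eq_abs]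
  have hcont := (contDiff_norm_rpow (E := ℝ) hp).continuous_deriv le_rfl
  rw [hderiv] at hcont
  simpa only [inv_mul_cancel_left₀ (zero_lt_one.trans hp).ne'] using hcont.const_mul p⁻¹

lemma one_le_add_rpow_neg {x s : ℝ} (hx : 0 < x) (hs : 0 ≤ s) : 1 ≤ x + x ^ (-s) := by
  rcases le_total 1 x with h | h
  · linarith [rpow_nonneg hx.le (-s)]
  · linarith [one_le_rpow_of_pos_of_le_one_of_nonpos hx h (neg_nonpos.2 hs)]

lemma rpow_mul_rpow_neg_sub_one {m y : ℝ} (hm : 0 < m) (hy : 0 < y) :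
    (y ^ p * m) ^ (-(p - 1)) = m * (m * y ^ (p - 1)) ^ (-p) := by
  have hm' : m * m ^ (-p) = m ^ (-(p - 1)) := by
    rw [mul_comm, ← rpow_add_one hm.ne']
    ring_nf
  rw [mul_rpow (by positivity) hm.le, mul_rpow hm.le (by positivity), ← rpow_mul hy.le,
    ← rpow_mul hy.le, ← mul_assoc, hm', mul_comm (m ^ _)]
  ring_nf

end RealPowers

/-! ### Volume of model manifolds -/

/-- The volume `V(r) = ∫₀ʳ ψ(s)^{n-1} ds` of a geodesic ball of the model, up to the measure of the
unit sphere; it is the numerator of `Theta` and the weight in the Pohozaev function. -/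
noncomputable def radialVolume (n : ℕ) (ψ : ℝ → ℝ) (r : ℝ) : ℝ := ∫ s in (0:ℝ)..r, ψ s ^ (n - 1)

/-- The defect `D(r) = n V(r) ψ'(r) - ψ(r)ⁿ`, which measures how far the model is from being
Euclidean on `[0, r]` and controls the sign of `Kfun`. -/
noncomputable def volumeDefect (n : ℕ) (ψ : ℝ → ℝ) (r : ℝ) : ℝ :=
  n * radialVolume n ψ r * deriv ψ r - ψ r ^ n

lemma exists_ne_self_of_integrableOn_Theta_rpow {n : ℕ} {ψ : ℝ → ℝ} {e : ℝ} (hn : 0 < n)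
    (h : IntegrableOn (fun s => Theta n ψ s ^ e) (Set.Ioi 0)) : ∃ r, 0 < r ∧ ψ r ≠ r := by
  by_contra! hid
  have hn' : (0 : ℝ) < n := Nat.cast_pos.2 hn
  have hTheta : ∀ r, 0 < r → Theta n ψ r = r / n := by
    intro r hr
    have hvol : ∫ s in (0:ℝ)..r, ψ s ^ (n - 1) = r ^ n / n := by
      rw [intervalIntegral.integral_congr_uIoo (g := fun s => s ^ (n - 1)) fun s hs => by
        rw [Set.uIoo_of_le hr.le] at hs
        simp only [hid s hs.1], integral_pow, Nat.cast_pred hn, Nat.sub_add_cancel hn]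
      simp [hn.ne']
    rw [Theta, hvol, hid r hr, ← mul_pow_sub_one hn.ne' r]
    field_simp
  refine not_integrableOn_Ioi_rpow e ((integrableOn_congr_fun (fun s hs => ?_)
    measurableSet_Ioi).1 (h.mul_const ((n : ℝ) ^ e)))
  have hs : 0 < s := hs
  simp only [hTheta s hs]
  rw [← mul_rpow (by positivity) hn'.le, div_mul_cancel₀ _ hn'.ne']

namespace IsCHModel

variable {n : ℕ} {ψ : ℝ → ℝ} {r : ℝ}

lemma continuous (hψ : IsCHModel ψ) : Continuous ψ := hψ.1.continuous

lemma pos (hψ : IsCHModel ψ) (hr : 0 < r) : 0 < ψ r := hψ.2.2.2.2 r hr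

lemma hasDerivAt (hψ : IsCHModel ψ) (r : ℝ) : HasDerivAt ψ (deriv ψ r) r :=
  (hψ.1.differentiable (by simp) r).hasDerivAt

lemma hasDerivAt_deriv (hψ : IsCHModel ψ) (r : ℝ) :
    HasDerivAt (deriv ψ) (deriv (deriv ψ) r) r :=
  ((contDiff_infty_iff_deriv.1 hψ.1).2.differentiable (by simp) r).hasDerivAt

lemma hasDerivAt_pow_pred (hψ : IsCHModel ψ) (hn : 0 < n) (hr : 0 < r) :
    HasDerivAt (fun s => ψ s ^ (n - 1)) ((n - 1) * (deriv ψ r / ψ r) * ψ r ^ (n - 1)) r := by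
  have hψr := (hψ.pos hr).ne'
  refine ((hψ.hasDerivAt r).pow (n - 1)).congr_deriv ?_
  obtain rfl | ⟨k, rfl⟩ : n = 1 ∨ ∃ k, n = k + 2 := by
    rcases n with _ | _ | k <;> simp at hn ⊢
  · simp
  · simp only [Nat.add_one_sub_one]
    push_cast
    field_simp
    ring

lemma exists_deriv_deriv_pos (hψ : IsCHModel ψ) (hne : ∃ r, 0 < r ∧ ψ r ≠ r) :
    ∃ r, 0 < r ∧ 0 < deriv (deriv ψ) r := by
  by_contra! hflat
  obtain ⟨r, hr, hψr⟩ := hne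
  obtain ⟨s, ⟨hs, -⟩, hslope⟩ := exists_hasDerivAt_eq_slope ψ (deriv ψ) hr
    hψ.continuous.continuousOn fun x _ => hψ.hasDerivAt x
  obtain ⟨t, ⟨ht, -⟩, hslope'⟩ := exists_hasDerivAt_eq_slope (deriv ψ) (deriv (deriv ψ)) hs
    (fun x _ => (hψ.hasDerivAt_deriv x).continuousAt.continuousWithinAt)
    fun x _ => hψ.hasDerivAt_deriv x
  have hderiv : deriv ψ s = 1 := by
    have hzero : deriv (deriv ψ) t = 0 := (hflat t ht).antisymm (hψ.2.2.2.1 t ht.le)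
    rw [hzero, hψ.2.2.1, sub_zero, eq_comm, div_eq_zero_iff] at hslope'
    linarith [hslope'.resolve_right hs.ne']
  rw [hderiv, hψ.2.1, sub_zero, sub_zero, eq_comm, div_eq_one_iff_eq hr.ne'] at hslope
  exact hψr hslope

lemma hasDerivAt_radialVolume (hψ : IsCHModel ψ) (r : ℝ) :
    HasDerivAt (radialVolume n ψ) (ψ r ^ (n - 1)) r :=
  ((hψ.continuous.pow (n - 1)).integral_hasStrictDerivAt 0 r).hasDerivAt

lemma radialVolume_pos (hψ : IsCHModel ψ) (hr : 0 < r) : 0 < radialVolume n ψ r :=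
  intervalIntegral.intervalIntegral_pos_of_pos_on
    ((hψ.continuous.pow (n - 1)).intervalIntegrable 0 r) (fun _ hs => pow_pos (hψ.pos hs.1) _) hr

lemma hasDerivAt_volumeDefect (hψ : IsCHModel ψ) (r : ℝ) :
    HasDerivAt (volumeDefect n ψ) (n * radialVolume n ψ r * deriv (deriv ψ) r) r := by
  refine ((((hψ.hasDerivAt_radialVolume r).const_mul (n : ℝ)).mul (hψ.hasDerivAt_deriv r)).sub
    ((hψ.hasDerivAt r).pow n)).congr_deriv ?_
  ring

lemma volumeDefect_nonneg (hψ : IsCHModel ψ) (hn : 0 < n) (hr : 0 ≤ r) :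
    0 ≤ volumeDefect n ψ r := by
  have hmono : MonotoneOn (volumeDefect n ψ) (Set.Ici 0) :=
    monotoneOn_of_hasDerivAt_nonneg (convex_Ici 0) subset_rfl
      (fun s _ => (hψ.hasDerivAt_volumeDefect s).continuousAt.continuousWithinAt)
      (fun s _ _ => hψ.hasDerivAt_volumeDefect s) fun s _ hs =>
        mul_nonneg (mul_nonneg n.cast_nonneg (hψ.radialVolume_pos hs).le) (hψ.2.2.2.1 s hs.le)
  have hzero : volumeDefect n ψ 0 = 0 := by
    simp [volumeDefect, radialVolume, hψ.2.1, hn.ne']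
  exact hzero ▸ hmono Set.self_mem_Ici hr hr

lemma volumeDefect_pos (hψ : IsCHModel ψ) (hn : 0 < n) (hr : 0 < r)
    (h : 0 < deriv (deriv ψ) r) : 0 < volumeDefect n ψ r := by
  have hV := hψ.radialVolume_pos (n := n) hr
  refine pos_of_eventually_nonneg_of_hasDerivAt_ne_zero ?_ (hψ.hasDerivAt_volumeDefect r)
    (by positivity)
  filter_upwards [lt_mem_nhds hr] with s hs using hψ.volumeDefect_nonneg hn hs.le

end IsCHModel

/-! ### The sign of the Pohozaev kernel -/

/-- The gap `1/p* - 1/(q+1)` between the reciprocal of the critical Sobolev exponent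
`p* = np/(n-p)` and that of `q + 1`. -/
noncomputable def sobolevGap (n : ℕ) (p q : ℝ) : ℝ := (n - p) / (n * p) - 1 / (q + 1)

section Kernel

variable {n : ℕ} {p q : ℝ} {ψ : ℝ → ℝ} {r : ℝ}

lemma sobolevGap_nonneg (hp : 0 < p) (hpn : p < n) (hq : n * p / (n - p) - 1 ≤ q) :
    0 ≤ sobolevGap n p q := by
  rw [sobolevGap, sub_nonneg, ← one_div_div (n * p)]
  exact one_div_le_one_div_of_le (div_pos (mul_pos (hp.trans hpn) hp) (sub_pos.2 hpn))
    (sub_le_iff_le_add.1 hq)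

lemma sobolevGap_pos (hp : 0 < p) (hpn : p < n) (hq : n * p / (n - p) - 1 < q) :
    0 < sobolevGap n p q := by
  rw [sobolevGap, sub_pos, ← one_div_div (n * p)]
  exact one_div_lt_one_div_of_lt (div_pos (mul_pos (hp.trans hpn) hp) (sub_pos.2 hpn))
    (sub_lt_iff_lt_add.1 hq)

lemma Kfun_eq_neg (hn : 0 < n) (hp : p ≠ 0) (hψr : ψ r ≠ 0) :
    Kfun n p q ψ r =
      -(sobolevGap n p q * ψ r ^ (n - 1) + (n - 1) / (n * ψ r) * volumeDefect n ψ r) := by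
  have hn' : (n : ℝ) ≠ 0 := Nat.cast_ne_zero.2 hn.ne'
  rw [Kfun, sobolevGap, volumeDefect, radialVolume, ← mul_pow_sub_one hn.ne' (ψ r)]
  generalize 1 / (q + 1) = c
  field_simp
  ring

lemma Kfun_nonpos (hp : 1 ≤ p) (hpn : p < n) (hq : n * p / (n - p) - 1 ≤ q) (hψ : IsCHModel ψ)
    (hr : 0 < r) : Kfun n p q ψ r ≤ 0 := by
  have hn : 0 < n := by exact_mod_cast (zero_lt_one.trans_le hp).trans hpn
  have hn1 : 0 < (n : ℝ) - 1 := by linarith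
  have hψr := hψ.pos hr
  have hgap := sobolevGap_nonneg (by linarith) hpn hq
  have hD := hψ.volumeDefect_nonneg hn hr.le
  rw [Kfun_eq_neg hn (by linarith) hψr.ne', neg_nonpos]
  positivity

lemma exists_Kfun_neg (hp : 1 ≤ p) (hpn : p < n) (hq : n * p / (n - p) - 1 ≤ q)
    (hψ : IsCHModel ψ) (h : q ≠ n * p / (n - p) - 1 ∨ ∃ r, 0 < r ∧ ψ r ≠ r) :
    ∃ r, 0 < r ∧ Kfun n p q ψ r < 0 := by
  have hn : 0 < n := by exact_mod_cast (zero_lt_one.trans_le hp).trans hpn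
  have hn1 : 0 < (n : ℝ) - 1 := by linarith
  rcases h with hne | hne
  · have hψ1 := hψ.pos one_pos
    have hgap := sobolevGap_pos (by linarith) hpn (hq.lt_of_ne' hne)
    have hD := hψ.volumeDefect_nonneg hn zero_le_one
    refine ⟨1, one_pos, ?_⟩
    rw [Kfun_eq_neg hn (by linarith) hψ1.ne', neg_lt_zero]
    positivity
  · obtain ⟨r, hr, hψ''⟩ := hψ.exists_deriv_deriv_pos hne
    have hψr := hψ.pos hr
    have hgap := sobolevGap_nonneg (by linarith) hpn hq
    have hD := hψ.volumeDefect_pos hn hr hψ''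
    refine ⟨r, hr, ?_⟩
    rw [Kfun_eq_neg hn (by linarith) hψr.ne', neg_lt_zero]
    positivity

end Kernel

/-! ### Radial solutions on `[0, T)` -/

/-- The interval `[0, T)` of existence of a radial solution, for `T ∈ (0, ∞]`. -/
def radialInterval (T : ℝ≥0∞) : Set ℝ := {r | 0 ≤ r ∧ ENNReal.ofReal r < T}

section RadialInterval

variable {T : ℝ≥0∞} {r s : ℝ}

lemma mem_radialInterval_top (hr : 0 ≤ r) : r ∈ radialInterval ⊤ :=
  ⟨hr, ENNReal.ofReal_lt_top⟩

lemma mem_radialInterval_of_le (hr : r ∈ radialInterval T) (hs : 0 ≤ s) (hsr : s ≤ r) :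
    s ∈ radialInterval T :=
  ⟨hs, (ENNReal.ofReal_le_ofReal hsr).trans_lt hr.2⟩

lemma zero_mem_radialInterval (hr : r ∈ radialInterval T) : 0 ∈ radialInterval T :=
  mem_radialInterval_of_le hr le_rfl hr.1

lemma convex_radialInterval (T : ℝ≥0∞) : Convex ℝ (radialInterval T) :=
  Set.OrdConnected.convex ⟨fun _ hx _ hy _ hz =>
    mem_radialInterval_of_le hy (hx.1.trans hz.1) hz.2⟩

lemma radialInterval_mem_nhds (hr : r ∈ radialInterval T) (hr0 : 0 < r) :
    radialInterval T ∈ 𝓝 r :=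
  (lt_mem_nhds hr0).mp <|
    (ENNReal.continuous_ofReal.continuousAt.eventually (gt_mem_nhds hr.2)).mono
      fun _ hT h0 => ⟨h0.le, hT⟩

end RadialInterval

/-- The flux `W = -ψ^{n-1} |u'|^{p-2} u'` of a radial function through the geodesic sphere of radius
`r`, with the sign that makes it positive for decreasing functions. -/
noncomputable def radialFlux (n : ℕ) (p : ℝ) (ψ u : ℝ → ℝ) (r : ℝ) : ℝ :=
  -(ψ r ^ (n - 1) * |deriv u r| ^ (p - 2) * deriv u r)

/-- The energy `∫₀ᴿ |u'|^p ψ^{n-1}` of a radial function on the geodesic ball of radius `R`. -/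
noncomputable def radialEnergy (n : ℕ) (p : ℝ) (ψ u : ℝ → ℝ) (R : ℝ) : ℝ :=
  ∫ r in (0:ℝ)..R, |deriv u r| ^ p * ψ r ^ (n - 1)

section RadialFunction

variable {n : ℕ} {p q : ℝ} {ψ u : ℝ → ℝ}

lemma radialFlux_mul_deriv (hp : p ≠ 0) (r : ℝ) :
    radialFlux n p ψ u r * deriv u r = -(|deriv u r| ^ p * ψ r ^ (n - 1)) := by
  rw [← abs_rpow_sub_two_mul_mul_self hp, radialFlux]
  ring

lemma pohozaevP_eq (r : ℝ) : pohozaevP n p q ψ u r =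
    radialVolume n ψ r * energyF p q u r - radialFlux n p ψ u r * u r / (q + 1) := by
  rw [pohozaevP, radialVolume, radialFlux]
  ring

end RadialFunction

namespace IsRadialSolution

variable {n : ℕ} {p q α : ℝ} {T : ℝ≥0∞} {ψ u : ℝ → ℝ} {r : ℝ}

lemma hasDerivAt (hu : IsRadialSolution n p q ψ T α u) (hr : r ∈ radialInterval T) :
    HasDerivAt u (deriv u r) r :=
  (hu.diff r hr.1 hr.2).hasDerivAt

lemma continuousOn (hu : IsRadialSolution n p q ψ T α u) : ContinuousOn u (radialInterval T) :=
  fun _ hr => (hu.hasDerivAt hr).continuousAt.continuousWithinAt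

lemma radialFlux_zero (hu : IsRadialSolution n p q ψ T α u) : radialFlux n p ψ u 0 = 0 := by
  simp [radialFlux, hu.deriv_init]

lemma continuousOn_radialFlux (hp : 1 < p) (hψ : IsCHModel ψ)
    (hu : IsRadialSolution n p q ψ T α u) :
    ContinuousOn (radialFlux n p ψ u) (radialInterval T) := by
  have h := ((hψ.continuous.pow (n - 1)).continuousOn.mul
    ((continuous_abs_rpow_sub_two_mul hp).comp_continuousOn hu.deriv_cont)).neg
  refine h.congr fun s _ => ?_
  simp only [radialFlux, Pi.neg_apply, Pi.mul_apply, Pi.pow_apply, Function.comp_apply, mul_assoc]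

lemma hasDerivAt_radialFlux (hu : IsRadialSolution n p q ψ T α u) (hr : r ∈ radialInterval T)
    (hr0 : 0 < r) : HasDerivAt (radialFlux n p ψ u) (ψ r ^ (n - 1) * u r ^ q) r :=
  (hu.eqn r hr0 hr.2).fun_neg.congr_deriv (neg_neg _)

lemma radialFlux_pos (hp : 1 < p) (hψ : IsCHModel ψ) (hu : IsRadialSolution n p q ψ T α u)
    (hr : r ∈ radialInterval T) (hr0 : 0 < r) : 0 < radialFlux n p ψ u r := by
  have hderiv_pos : ∀ s ∈ radialInterval T, 0 < s → 0 < ψ s ^ (n - 1) * u s ^ q :=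
    fun s hs hs0 => mul_pos (pow_pos (hψ.pos hs0) _) (rpow_pos_of_pos (hu.pos s hs.1 hs.2) q)
  have hmono : MonotoneOn (radialFlux n p ψ u) (radialInterval T) :=
    monotoneOn_of_hasDerivAt_nonneg (convex_radialInterval T) (fun _ hs => hs.1)
      (hu.continuousOn_radialFlux hp hψ) (fun _ => hu.hasDerivAt_radialFlux)
      fun s hs hs0 => (hderiv_pos s hs hs0).le
  refine pos_of_eventually_nonneg_of_hasDerivAt_ne_zero ?_ (hu.hasDerivAt_radialFlux hr hr0)
    (hderiv_pos r hr hr0).ne'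
  filter_upwards [radialInterval_mem_nhds hr hr0] with s hs
  exact hu.radialFlux_zero ▸ hmono (zero_mem_radialInterval hs) hs hs.1

lemma deriv_neg (hp : 1 < p) (hψ : IsCHModel ψ) (hu : IsRadialSolution n p q ψ T α u)
    (hr : r ∈ radialInterval T) (hr0 : 0 < r) : deriv u r < 0 := by
  have hflux := neg_pos.1 (hu.radialFlux_pos hp hψ hr hr0)
  have hψr := hψ.pos hr0
  exact neg_of_mul_neg_right hflux (by positivity)

lemma antitoneOn (hp : 1 < p) (hψ : IsCHModel ψ) (hu : IsRadialSolution n p q ψ T α u) :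
    AntitoneOn u (radialInterval T) := by
  have hmono : MonotoneOn (-u) (radialInterval T) :=
    monotoneOn_of_hasDerivAt_nonneg (convex_radialInterval T) (fun _ hs => hs.1)
      hu.continuousOn.neg (fun s hs _ => (hu.hasDerivAt hs).neg)
      fun s hs hs0 => (neg_pos.2 (hu.deriv_neg hp hψ hs hs0)).le
  simpa only [Pi.neg_apply, neg_neg] using hmono.neg

lemma radialFlux_eq (hp : 1 < p) (hψ : IsCHModel ψ) (hu : IsRadialSolution n p q ψ T α u)
    (hr : r ∈ radialInterval T) (hr0 : 0 < r) :
    radialFlux n p ψ u r = ψ r ^ (n - 1) * |deriv u r| ^ (p - 1) := by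
  rw [radialFlux, ← abs_rpow_sub_two_mul_abs hp.ne', abs_of_neg (hu.deriv_neg hp hψ hr hr0)]
  ring

lemma hasDerivAt_abs_deriv_rpow_sub_one (hn : 0 < n) (hp : 1 < p) (hψ : IsCHModel ψ)
    (hu : IsRadialSolution n p q ψ T α u) (hr : r ∈ radialInterval T) (hr0 : 0 < r) :
    HasDerivAt (fun s => |deriv u s| ^ (p - 1))
      (u r ^ q - (n - 1) * (deriv ψ r / ψ r) * |deriv u r| ^ (p - 1)) r := by
  have hψr := hψ.pos hr0
  refine (((hu.hasDerivAt_radialFlux hr hr0).fun_div (hψ.hasDerivAt_pow_pred hn hr0)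
    (pow_pos hψr _).ne').congr_of_eventuallyEq ?_).congr_deriv ?_
  · filter_upwards [radialInterval_mem_nhds hr hr0, lt_mem_nhds hr0] with s hs hs0
    rw [hu.radialFlux_eq hp hψ hs hs0, mul_div_cancel_left₀ _ (pow_pos (hψ.pos hs0) _).ne']
  · rw [hu.radialFlux_eq hp hψ hr hr0]
    field_simp

lemma hasDerivAt_abs_deriv_rpow (hn : 0 < n) (hp : 1 < p) (hψ : IsCHModel ψ)
    (hu : IsRadialSolution n p q ψ T α u) (hr : r ∈ radialInterval T) (hr0 : 0 < r) :
    HasDerivAt (fun s => |deriv u s| ^ p)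
      (p / (p - 1) * (|deriv u r| * u r ^ q -
        (n - 1) * (deriv ψ r / ψ r) * |deriv u r| ^ p)) r := by
  have hp1 : p - 1 ≠ 0 := (sub_pos.2 hp).ne'
  have hd := abs_pos.2 (hu.deriv_neg hp hψ hr hr0).ne
  have h := (hu.hasDerivAt_abs_deriv_rpow_sub_one hn hp hψ hr hr0).rpow_const (p := p / (p - 1))
    (Or.inl (by positivity))
  have hexp : (p - 1) * (p / (p - 1) - 1) = 1 := by
    field_simp
    ring
  simp only [← rpow_mul (abs_nonneg _), mul_div_cancel₀ p hp1, hexp, rpow_one] at h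
  refine h.congr_deriv ?_
  have hsplit : |deriv u r| ^ p = |deriv u r| ^ (p - 1) * |deriv u r| := by
    rw [← rpow_add_one hd.ne', sub_add_cancel]
  rw [hsplit]
  ring

lemma hasDerivAt_energyF (hn : 0 < n) (hp : 1 < p) (hq : q + 1 ≠ 0) (hψ : IsCHModel ψ)
    (hu : IsRadialSolution n p q ψ T α u) (hr : r ∈ radialInterval T) (hr0 : 0 < r) :
    HasDerivAt (energyF p q u) (-((n - 1) * (deriv ψ r / ψ r) * |deriv u r| ^ p)) r := by
  have hpow := (hu.hasDerivAt hr).rpow_const (p := q + 1) (Or.inl (hu.pos r hr.1 hr.2).ne')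
  refine (((hu.hasDerivAt_abs_deriv_rpow hn hp hψ hr hr0).const_mul ((p - 1) / p)).add
    (hpow.div_const (q + 1))).congr_deriv ?_
  have hp1 : p - 1 ≠ 0 := (sub_pos.2 hp).ne'
  rw [abs_of_neg (hu.deriv_neg hp hψ hr hr0), add_sub_cancel_right]
  field_simp
  ring

lemma hasDerivAt_pohozaevP (hn : 0 < n) (hp : 1 < p) (hq : q + 1 ≠ 0) (hψ : IsCHModel ψ)
    (hu : IsRadialSolution n p q ψ T α u) (hr : r ∈ radialInterval T) (hr0 : 0 < r) :
    HasDerivAt (pohozaevP n p q ψ u) (Kfun n p q ψ r * |deriv u r| ^ p) r := by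
  have h := ((hψ.hasDerivAt_radialVolume (n := n) r).fun_mul
    (hu.hasDerivAt_energyF hn hp hq hψ hr hr0)).fun_sub
    (((hu.hasDerivAt_radialFlux hr hr0).fun_mul (hu.hasDerivAt hr)).div_const (q + 1))
  refine (h.congr_of_eventuallyEq (.of_forall pohozaevP_eq)).congr_deriv ?_
  rw [radialFlux_mul_deriv (zero_lt_one.trans hp).ne', Kfun, energyF,
    rpow_add_one (hu.pos r hr.1 hr.2).ne', radialVolume]
  ring

lemma continuousOn_pohozaevP (hp : 1 < p) (hψ : IsCHModel ψ)
    (hu : IsRadialSolution n p q ψ T α u) :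
    ContinuousOn (pohozaevP n p q ψ u) (radialInterval T) := by
  have hV : Continuous (radialVolume n ψ) :=
    continuous_iff_continuousAt.2 fun r => (hψ.hasDerivAt_radialVolume r).continuousAt
  have hF : ContinuousOn (energyF p q u) (radialInterval T) :=
    ((hu.deriv_cont.abs.rpow_const fun _ _ => Or.inr (by linarith)).const_mul _).add
      ((hu.continuousOn.rpow_const fun s hs => Or.inl (hu.pos s hs.1 hs.2).ne').div_const _)
  exact ((hV.continuousOn.mul hF).sub (((hu.continuousOn_radialFlux hp hψ).mul
    hu.continuousOn).div_const (q + 1))).congr fun s _ => pohozaevP_eq s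

lemma antitoneOn_pohozaevP (hn : 0 < n) (hp : 1 < p) (hq : q + 1 ≠ 0) (hψ : IsCHModel ψ)
    (hu : IsRadialSolution n p q ψ T α u)
    (hK : ∀ s ∈ radialInterval T, 0 < s → Kfun n p q ψ s ≤ 0) :
    AntitoneOn (pohozaevP n p q ψ u) (radialInterval T) := by
  have hmono : MonotoneOn (-pohozaevP n p q ψ u) (radialInterval T) :=
    monotoneOn_of_hasDerivAt_nonneg (convex_radialInterval T) (fun _ hs => hs.1)
      (hu.continuousOn_pohozaevP hp hψ).neg
      (fun s hs hs0 => (hu.hasDerivAt_pohozaevP hn hp hq hψ hs hs0).neg)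
      fun s hs hs0 => neg_nonneg.2 (mul_nonpos_of_nonpos_of_nonneg (hK s hs hs0) (by positivity))
  simpa only [Pi.neg_apply, neg_neg] using hmono.neg

lemma pohozaevP_neg (hn : 0 < n) (hp : 1 < p) (hq : q + 1 ≠ 0) (hψ : IsCHModel ψ)
    (hu : IsRadialSolution n p q ψ T α u)
    (hK : ∀ s ∈ radialInterval T, 0 < s → Kfun n p q ψ s ≤ 0) (hr : r ∈ radialInterval T)
    (hr0 : 0 < r) (hKr : Kfun n p q ψ r < 0) : pohozaevP n p q ψ u r < 0 := by
  have hzero : pohozaevP n p q ψ u 0 = 0 := by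
    simp [pohozaevP, hu.deriv_init]
  have hd := abs_pos.2 (hu.deriv_neg hp hψ hr hr0).ne
  have hderiv_ne : -(Kfun n p q ψ r * |deriv u r| ^ p) ≠ 0 :=
    neg_ne_zero.2 (mul_ne_zero hKr.ne (by positivity))
  refine neg_pos.1 (pos_of_eventually_nonneg_of_hasDerivAt_ne_zero (f := -pohozaevP n p q ψ u) ?_
    (hu.hasDerivAt_pohozaevP hn hp hq hψ hr hr0).neg hderiv_ne)
  filter_upwards [radialInterval_mem_nhds hr hr0] with s hs
  have h := hu.antitoneOn_pohozaevP hn hp hq hψ hK (zero_mem_radialInterval hs) hs hs.1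
  exact neg_nonneg.2 (hzero ▸ h)

lemma neg_pohozaevP_le (hp : 1 < p) (hq : 0 < q + 1) (hψ : IsCHModel ψ)
    (hu : IsRadialSolution n p q ψ T α u) (hr : r ∈ radialInterval T) (hr0 : 0 < r) :
    (q + 1) * -pohozaevP n p q ψ u r ≤ radialFlux n p ψ u r * u r := by
  have hur := hu.pos r hr.1 hr.2
  have hV := hψ.radialVolume_pos (n := n) hr0
  have hF : 0 ≤ energyF p q u r := by
    have := sub_pos.2 hp
    rw [energyF]
    positivity
  rw [pohozaevP_eq, ← le_div_iff₀' hq]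
  linarith [mul_nonneg hV.le hF]

lemma one_sub_le_energy_density {l : ℝ} (hp : 1 < p) (hq : 0 ≤ q) (hψ : IsCHModel ψ)
    (hu : IsRadialSolution n p q ψ T α u) (hr : r ∈ radialInterval T) (hr0 : 0 < r) (hl : 0 < l)
    (hlu : l ≤ u r) :
    1 - (l ^ q)⁻¹ * (ψ r ^ (n - 1) * u r ^ q * radialFlux n p ψ u r ^ (-p)) ≤
      |deriv u r| ^ p * ψ r ^ (n - 1) := by
  have hψr : 0 < ψ r ^ (n - 1) := pow_pos (hψ.pos hr0) _
  have hd := abs_pos.2 (hu.deriv_neg hp hψ hr hr0).ne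
  have hW := hu.radialFlux_pos hp hψ hr hr0
  set X := |deriv u r| ^ p * ψ r ^ (n - 1) with hX
  have hX_rpow : X ^ (-(p - 1)) ≤
      (l ^ q)⁻¹ * (ψ r ^ (n - 1) * u r ^ q * radialFlux n p ψ u r ^ (-p)) := by
    rw [hX, rpow_mul_rpow_neg_sub_one hψr hd, ← hu.radialFlux_eq hp hψ hr hr0,
      le_inv_mul_iff₀ (by positivity)]
    calc l ^ q * (ψ r ^ (n - 1) * radialFlux n p ψ u r ^ (-p))
        ≤ u r ^ q * (ψ r ^ (n - 1) * radialFlux n p ψ u r ^ (-p)) := by gcongr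
      _ = ψ r ^ (n - 1) * u r ^ q * radialFlux n p ψ u r ^ (-p) := by ring
  linarith [one_le_add_rpow_neg (x := X) (by positivity) (sub_pos.2 hp).le]

lemma hasDerivAt_radialEnergy (hp : 0 ≤ p) (hψ : IsCHModel ψ)
    (hu : IsRadialSolution n p q ψ T α u) (hr : r ∈ radialInterval T) (hr0 : 0 < r) :
    HasDerivAt (radialEnergy n p ψ u) (|deriv u r| ^ p * ψ r ^ (n - 1)) r := by
  have hcont : ContinuousOn (fun s => |deriv u s| ^ p * ψ s ^ (n - 1)) (radialInterval T) :=
    (ContinuousOn.rpow_const hu.deriv_cont.abs fun _ _ => Or.inr hp).mul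
      (hψ.continuous.pow _).continuousOn
  have hnhds := radialInterval_mem_nhds hr hr0
  refine intervalIntegral.integral_hasDerivAt_right ?_ ?_ (hcont.continuousAt hnhds)
  · refine (hcont.mono fun s hs => ?_).intervalIntegrable
    rw [Set.uIcc_of_le hr0.le] at hs
    exact mem_radialInterval_of_le hr hs.1 hs.2
  · exact (hcont.mono interior_subset).stronglyMeasurableAtFilter isOpen_interior r
      (mem_interior_iff_mem_nhds.2 hnhds)

end IsRadialSolution

/-! ### Energy of global solutions -/

namespace IsRadialSolution

variable {n : ℕ} {p q α : ℝ} {ψ u : ℝ → ℝ}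

lemma tendsto_zero_or_exists_pos_le (hp : 1 < p) (hψ : IsCHModel ψ)
    (hu : IsRadialSolution n p q ψ ⊤ α u) :
    Tendsto u atTop (𝓝 0) ∨ ∃ l, 0 < l ∧ ∀ r, 0 ≤ r → l ≤ u r := by
  refine or_iff_not_imp_right.2 fun h => ?_
  push Not at h
  refine Metric.tendsto_atTop.2 fun ε hε => ?_
  obtain ⟨r, hr, hur⟩ := h ε hε
  refine ⟨r, fun s hrs => ?_⟩
  have hs := mem_radialInterval_top (hr.trans hrs)
  rw [dist_zero_right, norm_of_nonneg (hu.pos s hs.1 hs.2).le]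
  exact (hu.antitoneOn hp hψ (mem_radialInterval_top hr) hs hrs).trans_lt hur

lemma tendsto_radialEnergy_of_pos_le {l : ℝ} (hp : 1 < p) (hq : 0 ≤ q) (hψ : IsCHModel ψ)
    (hu : IsRadialSolution n p q ψ ⊤ α u) (hl : 0 < l) (hlu : ∀ r, 0 ≤ r → l ≤ u r) :
    Tendsto (radialEnergy n p ψ u) atTop atTop := by
  have hp1 : 0 < p - 1 := sub_pos.2 hp
  set W := radialFlux n p ψ u
  have hW : ∀ r, 0 < r → 0 < W r := fun r hr =>
    hu.radialFlux_pos hp hψ (mem_radialInterval_top hr.le) hr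
  have hcomparison : ∀ r, 0 < r → HasDerivAt
      (fun r => r + (l ^ q)⁻¹ / (p - 1) * W r ^ (-(p - 1)))
      (1 - (l ^ q)⁻¹ * (ψ r ^ (n - 1) * u r ^ q * W r ^ (-p))) r := by
    intro r hr
    refine ((hasDerivAt_id r).add (((hu.hasDerivAt_radialFlux (mem_radialInterval_top hr.le)
      hr).rpow_const (p := -(p - 1)) (Or.inl (hW r hr).ne')).const_mul _)).congr_deriv ?_
    rw [show -(p - 1) - 1 = -p by ring]
    field_simp
    ring
  refine tendsto_atTop_of_hasDerivAt_le
    (fun r hr => hu.hasDerivAt_radialEnergy (by linarith) hψ (mem_radialInterval_top hr.le) hr)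
    hcomparison (fun r hr => ?_) (tendsto_atTop_mono' atTop ?_ tendsto_id)
  · exact hu.one_sub_le_energy_density hp hq hψ (mem_radialInterval_top hr.le) hr hl (hlu r hr.le)
  · filter_upwards [eventually_gt_atTop 0] with r hr
    have := hW r hr
    exact le_add_of_nonneg_right (by positivity)

lemma tendsto_radialEnergy_of_le_radialFlux_mul {k a : ℝ} (hp : 1 < p) (hψ : IsCHModel ψ)
    (hu : IsRadialSolution n p q ψ ⊤ α u) (hu0 : Tendsto u atTop (𝓝 0)) (hk : 0 < k) (ha : 0 ≤ a)
    (hW : ∀ r, a ≤ r → k ≤ radialFlux n p ψ u r * u r) :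
    Tendsto (radialEnergy n p ψ u) atTop atTop := by
  have hpos : ∀ r, a < r → 0 < u r := fun r hr =>
    hu.pos r (ha.trans hr.le) ENNReal.ofReal_lt_top
  refine tendsto_atTop_of_hasDerivAt_le (a := a) (g := fun r => -k * log (u r))
    (fun r hr => hu.hasDerivAt_radialEnergy (by linarith) hψ
      (mem_radialInterval_top (ha.trans hr.le)) (ha.trans_lt hr))
    (fun r hr => ((hu.hasDerivAt (mem_radialInterval_top (ha.trans hr.le))).log
      (hpos r hr).ne').const_mul (-k)) (fun r hr => ?_) ?_
  · have hur := hpos r hr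
    have hd := hu.deriv_neg hp hψ (mem_radialInterval_top (ha.trans hr.le)) (ha.trans_lt hr)
    rw [← neg_neg (|deriv u r| ^ p * _), ← radialFlux_mul_deriv (zero_lt_one.trans hp).ne',
      ← mul_div_assoc, div_le_iff₀ hur]
    linarith [mul_le_mul_of_nonneg_right (hW r hr.le) (neg_pos.2 hd).le]
  · have hlog : Tendsto (fun r => log (u r)) atTop atBot :=
      tendsto_log_nhdsGT_zero.comp
        (tendsto_nhdsWithin_iff.2 ⟨hu0, (eventually_gt_atTop a).mono hpos⟩)
    exact hlog.const_mul_atBot_of_neg (neg_lt_zero.2 hk)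

theorem tendsto_radialEnergy_of_Kfun_nonpos (hn : 0 < n) (hp : 1 < p) (hq : 0 ≤ q)
    (hψ : IsCHModel ψ) (hK : ∀ r, 0 < r → Kfun n p q ψ r ≤ 0)
    (hK' : ∃ r, 0 < r ∧ Kfun n p q ψ r < 0) (hu : IsRadialSolution n p q ψ ⊤ α u) :
    Tendsto (radialEnergy n p ψ u) atTop atTop := by
  obtain ⟨b, hb, hKb⟩ := hK'
  have hq1 : 0 < q + 1 := by linarith
  have hP_anti := hu.antitoneOn_pohozaevP hn hp hq1.ne' hψ fun r _ => hK r
  have hPb : pohozaevP n p q ψ u b < 0 :=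
    hu.pohozaevP_neg hn hp hq1.ne' hψ (fun r _ => hK r) (mem_radialInterval_top hb.le) hb hKb
  rcases hu.tendsto_zero_or_exists_pos_le hp hψ with hu0 | ⟨l, hl, hlu⟩
  · refine hu.tendsto_radialEnergy_of_le_radialFlux_mul hp hψ hu0
      (mul_pos hq1 (neg_pos.2 hPb)) hb.le fun r hbr => ?_
    have hr := hb.trans_le hbr
    have hPr := hP_anti (mem_radialInterval_top hb.le) (mem_radialInterval_top hr.le) hbr
    calc (q + 1) * -pohozaevP n p q ψ u b ≤ (q + 1) * -pohozaevP n p q ψ u r := by gcongr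
      _ ≤ radialFlux n p ψ u r * u r :=
        hu.neg_pohozaevP_le hp hq1 hψ (mem_radialInterval_top hr.le) hr
  · exact hu.tendsto_radialEnergy_of_pos_le hp hq hψ hl hlu

end IsRadialSolution

theorem statement_11_general (n : ℕ) (p q : ℝ) (hp1 : 1 < p) (hpn : p < n)
    (hq : (n : ℝ) * p / ((n : ℝ) - p) - 1 ≤ q)
    (ψ : ℝ → ℝ) (hψ : IsCHModel ψ)
    (hne : q ≠ (n : ℝ) * p / ((n : ℝ) - p) - 1 ∨ ∃ r, 0 < r ∧ ψ r ≠ r)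
    (α : ℝ) (u : ℝ → ℝ) (hu : IsRadialSolution n p q ψ ⊤ α u) :
    Tendsto (fun R : ℝ => ∫ r in (0:ℝ)..R, |deriv u r| ^ p * ψ r ^ (n - 1))
      atTop atTop := by
  have hn : 0 < n := by exact_mod_cast (zero_lt_one.trans hp1).trans hpn
  have hq0 : 0 ≤ q := by
    have hcritical : 1 ≤ (n : ℝ) * p / (n - p) := by
      rw [one_le_div (sub_pos.2 hpn)]
      nlinarith
    linarith
  exact hu.tendsto_radialEnergy_of_Kfun_nonpos hn hp1 hq0 hψ
    (fun r => Kfun_nonpos hp1.le hpn hq hψ) (exists_Kfun_neg hp1.le hpn hq hψ hne)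

/-- in the `p`-stochastically incomplete case, every global radial
solution has infinite energy. -/
theorem statement_11 (n : ℕ) (hn : 2 ≤ n) (p q : ℝ) (hp1 : 1 < p) (hpn : p < n)
    (hq : (n : ℝ) * p / ((n : ℝ) - p) - 1 ≤ q)
    (ψ : ℝ → ℝ) (hψ : IsCHModel ψ)
    (hpi : IntegrableOn (fun s : ℝ => Theta n ψ s ^ (1 / (p - 1))) (Set.Ioi (0:ℝ)))
    (α : ℝ) (hα : 0 < α)
    (u : ℝ → ℝ) (hu : IsRadialSolution n p q ψ ⊤ α u) :
    Tendsto (fun R : ℝ => ∫ r in (0:ℝ)..R, |deriv u r| ^ p * ψ r ^ (n - 1))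
      atTop atTop :=
  statement_11_general n p q hp1 hpn hq ψ hψ
    (Or.inr (exists_ne_self_of_integrableOn_Theta_rpow (by omega) hpi)) α u hu
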